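/- arXiv:2204.00870 — 3 statements merged into one kernel-verified Lean document; each statement's English description precedes it below -/
import Mathlib

section
/- Let a transition system with states S, total successor relation step, terminal set Term (terminal states only step to themselves), initial set Init, and cost valuation c : S → ℤ be terminating, and let χ : S → ℝ be an anti-potential function for it. Then for every reachable state s and every run ρ from s, the cost of ρ is bounded below by χ(s), i.e. χ(s) ≤ (c(ρ N) − c(s) : ℝ) where N is the first index at which ρ is terminal. (Consequently χ(s) is a lower bound on the minimal cost CostInf(s) of runs from s.) -/
/-- A run of the transition system from state `s`. -/
def IsRun {S : Type*} (step : S → S → Prop) (s : S) (ρ : ℕ → S) : Prop :=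
  ρ 0 = s ∧ ∀ n, step (ρ n) (ρ (n + 1))

/-- `s'` is reachable from `s`. -/
def ReachableFrom {S : Type*} (step : S → S → Prop) (s s' : S) : Prop :=
  ∃ ρ n, IsRun step s ρ ∧ ρ n = s'

/-- `s'` is reachable from some initial state in `Init`. -/
def Reachable {S : Type*} (step : S → S → Prop) (Init : Set S) (s' : S) : Prop :=
  ∃ s ∈ Init, ReachableFrom step s s'

/-- The system is terminating: every run from a reachable state visits a terminal state. -/
def Terminating {S : Type*} (step : S → S → Prop) (Term Init : Set S) : Prop :=
  ∀ s, Reachable step Init s → ∀ ρ, IsRun step s ρ → ∃ n, ρ n ∈ Term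

/-- The cost of a run: `c (ρ N) - c (ρ 0)` where `N` is the least index with `ρ N ∈ Term`. -/
noncomputable def RunCost {S : Type*} (Term : Set S) (c : S → ℤ) (ρ : ℕ → S) : ℤ :=
  c (ρ (sInf {n | ρ n ∈ Term})) - c (ρ 0)

/-- Potential function: sufficiency preservation and sufficiency on termination. -/
def IsPF {S : Type*} (step : S → S → Prop) (Term Init : Set S) (c : S → ℤ)
    (φ : S → ℝ) : Prop :=
  (∀ s s', Reachable step Init s → step s s' →
    φ s ≥ φ s' + ((c s' : ℝ) - (c s : ℝ))) ∧
  (∀ s, Reachable step Init s → s ∈ Term → φ s ≥ 0)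

/-- Anti-potential function: insufficiency preservation and insufficiency on termination. -/
def IsAntiPF {S : Type*} (step : S → S → Prop) (Term Init : Set S) (c : S → ℤ)
    (χ : S → ℝ) : Prop :=
  (∀ s s', Reachable step Init s → step s s' →
    χ s ≤ χ s' + ((c s' : ℝ) - (c s : ℝ))) ∧
  (∀ s, Reachable step Init s → s ∈ Term → χ s ≤ 0)

/-- Every state visited by a run from a reachable state is reachable. -/
theorem Reachable.of_isRun {S : Type*} {step : S → S → Prop} {Init : Set S} {s : S}
    (hs : Reachable step Init s) {ρ : ℕ → S} (hρ : IsRun step s ρ) (m : ℕ) :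
    Reachable step Init (ρ m) := by
  obtain ⟨i, hi, σ, n, ⟨hσ0, hσ⟩, hn⟩ := hs
  obtain ⟨hρ0, hρ⟩ := hρ
  refine ⟨i, hi, fun k => if k < n then σ k else ρ (k - n), n + m, ⟨?_, fun k => ?_⟩, by simp⟩
  · by_cases h : 0 < n
    · simp [h, hσ0]
    · obtain rfl : n = 0 := by omega
      simp [hρ0, ← hn, hσ0]
  · rcases lt_trichotomy (k + 1) n with h | h | h
    · simpa [h, (by omega : k < n)] using hσ k
    · subst h
      simpa [hρ0, ← hn] using hσ k
    · have hk : k + 1 - n = k - n + 1 := by omega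
      simpa only [if_neg (by omega : ¬ k < n), if_neg (by omega : ¬ k + 1 < n), hk] using hρ (k - n)

/-- Insufficiency preservation along a finite prefix of a run. -/
theorem IsAntiPF.le_add_cost {S : Type*} {step : S → S → Prop} {Term Init : Set S} {c : S → ℤ}
    {χ : S → ℝ} (hχ : IsAntiPF step Term Init c χ) {s : S} (hs : Reachable step Init s)
    {ρ : ℕ → S} (hρ : IsRun step s ρ) (n : ℕ) :
    χ s ≤ χ (ρ n) + ((c (ρ n) : ℝ) - (c s : ℝ)) := by
  induction n with
  | zero => simp [hρ.1]
  | succ n ih =>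
    have := hχ.1 _ _ (hs.of_isRun hρ n) (hρ.2 n)
    linarith

/-- an anti-potential function lower-bounds the cost of every run from a
reachable state in a terminating transition system. -/
theorem antipotential_lower_bounds_cost {S : Type*}
    (step : S → S → Prop) (Term Init : Set S) (c : S → ℤ)
    (htotal : ∀ s : S, ∃ s', step s s')
    (hTerm : ∀ s ∈ Term, ∀ s', step s s' → s' = s)
    (hterminating : Terminating step Term Init)
    (χ : S → ℝ) (hχ : IsAntiPF step Term Init c χ)
    (s : S) (hs : Reachable step Init s)
    (ρ : ℕ → S) (hρ : IsRun step s ρ)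
    (N : ℕ) (hN : ρ N ∈ Term) (hNmin : ∀ m < N, ρ m ∉ Term) :
    χ s ≤ ((c (ρ N) : ℝ) - (c s : ℝ)) := by
  have hle := hχ.le_add_cost hs hρ N
  have hterm := hχ.2 _ (hs.of_isRun hρ N) hN
  linarith
end

section
/- Let a transition system with states S, total successor relation step, terminal set Term (terminal states only step to themselves), initial set Init, and cost valuation c : S → ℤ be terminating, and assume that for every reachable state s the set of costs {Cost(ρ) : ρ a run from s} is bounded below. Then the function X : S → ℝ defined on each state s by X(s) = sInf {(Cost(ρ) : ℝ) : ρ a run from s} is an anti-potential function: it satisfies the insufficiency preservation condition at every reachable state and its successors, and it is nonpositive at every reachable terminal state. -/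
/-- Every state of a total system starts a run. -/
theorem exists_isRun {S : Type*} {step : S → S → Prop} (htotal : ∀ s : S, ∃ s', step s s')
    (s : S) : ∃ ρ : ℕ → S, IsRun step s ρ := by
  choose next hnext using htotal
  refine ⟨fun n => next^[n] s, rfl, fun n => ?_⟩
  simpa only [Function.iterate_succ_apply'] using hnext (next^[n] s)

/-- Prepend a state to a sequence of states. -/
def consRun {S : Type*} (s : S) (ρ : ℕ → S) : ℕ → S
  | 0 => s
  | n + 1 => ρ n

theorem IsRun.consRun {S : Type*} {step : S → S → Prop} {s s' : S} {ρ : ℕ → S}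
    (hρ : IsRun step s' ρ) (hs : step s s') : IsRun step s (consRun s ρ) := by
  refine ⟨rfl, fun n => ?_⟩
  cases n with
  | zero =>
    obtain ⟨rfl, -⟩ := hρ
    exact hs
  | succ n => exact hρ.2 n

/-- A run starting in a terminal state costs nothing. -/
theorem runCost_eq_zero {S : Type*} {Term : Set S} (c : S → ℤ) {ρ : ℕ → S}
    (h : ρ 0 ∈ Term) : RunCost Term c ρ = 0 := by
  have h0 : sInf {n | ρ n ∈ Term} = 0 := Nat.sInf_eq_zero.2 (Or.inl h)
  simp [RunCost, h0]

/-- Prepending a nonterminal state to a sequence that visits `Term` adds the cost of the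
first step. -/
theorem runCost_consRun {S : Type*} {Term : Set S} (c : S → ℤ) {s : S} {ρ : ℕ → S}
    (hs : s ∉ Term) (hρ : ∃ n, ρ n ∈ Term) :
    RunCost Term c (consRun s ρ) = RunCost Term c ρ + (c (ρ 0) - c s) := by
  obtain ⟨n, hn⟩ := hρ
  have hne : {n | consRun s ρ n ∈ Term}.Nonempty := ⟨n + 1, hn⟩
  have hpos : 1 ≤ sInf {n | consRun s ρ n ∈ Term} := by
    refine le_csInf hne fun m hm => Nat.one_le_iff_ne_zero.2 ?_
    rintro rfl
    exact hs hm
  have hinf : sInf {n | ρ n ∈ Term} + 1 = sInf {n | consRun s ρ n ∈ Term} :=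
    Nat.sInf_add hpos
  rw [RunCost, RunCost, ← hinf]
  simp only [consRun]
  ring

/-- the pointwise infimum of run costs is an anti-potential function. -/
theorem costInf_is_antipotential {S : Type*}
    (step : S → S → Prop) (Term Init : Set S) (c : S → ℤ)
    (htotal : ∀ s : S, ∃ s', step s s')
    (hTerm : ∀ s ∈ Term, ∀ s', step s s' → s' = s)
    (hterminating : Terminating step Term Init)
    (hbdd : ∀ s, Reachable step Init s →
      BddBelow {x : ℝ | ∃ ρ : ℕ → S, IsRun step s ρ ∧ x = (RunCost Term c ρ : ℝ)}) :
    IsAntiPF step Term Init c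
      (fun s => sInf {x : ℝ | ∃ ρ : ℕ → S, IsRun step s ρ ∧ x = (RunCost Term c ρ : ℝ)}) := by
  refine ⟨fun s s' hs hstep => ?_, fun s hs hsT => ?_⟩
  · by_cases hsT : s ∈ Term
    · obtain rfl := hTerm s hsT s' hstep
      simp
    · obtain ⟨ρ₀, hρ₀⟩ := exists_isRun htotal s'
      rw [← sub_le_iff_le_add]
      refine le_csInf ⟨_, ρ₀, hρ₀, rfl⟩ ?_
      rintro _ ⟨ρ, hρ, rfl⟩
      have hrun := hρ.consRun hstep
      have hvisit : ∃ n, ρ n ∈ Term := by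
        obtain ⟨n, hn⟩ := hterminating s hs _ hrun
        cases n with
        | zero => exact absurd hn hsT
        | succ n => exact ⟨n, hn⟩
      rw [sub_le_iff_le_add]
      refine csInf_le (hbdd s hs) ⟨_, hrun, ?_⟩
      rw [runCost_consRun c hsT hvisit, hρ.1]
      push_cast
      rfl
  · obtain ⟨ρ, hρ⟩ := exists_isRun htotal s
    refine csInf_le (hbdd s hs) ⟨ρ, hρ, ?_⟩
    rw [runCost_eq_zero c (hρ.1.symm ▸ hsT), Int.cast_zero]
end

section
/- Let T_new and T_old be two terminating transition systems sharing an input type X, input set Θ₀, and initial-state maps ι_new, ι_old. Suppose φ_new is a potential function for T_new (with reachability taken from the initial states {ι_new x : x ∈ Θ₀}) and χ_old is an anti-potential function for T_old (with reachability from {ι_old x : x ∈ Θ₀}). Then for every input x ∈ Θ₀, every run ρ_new from ι_new x in T_new and every run ρ_old from ι_old x in T_old, Cost(ρ_new) − Cost(ρ_old) ≤ φ_new(ι_new x) − χ_old(ι_old x). -/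
/-- `t` is a threshold for the DiffCost problem. -/
noncomputable def IsThreshold {Sn So X : Type*}
    (stepN : Sn → Sn → Prop) (TermN : Set Sn) (cN : Sn → ℤ)
    (stepO : So → So → Prop) (TermO : Set So) (cO : So → ℤ)
    (Θ₀ : Set X) (ιN : X → Sn) (ιO : X → So) (t : ℝ) : Prop :=
  ∀ x ∈ Θ₀, ∀ ρN : ℕ → Sn, IsRun stepN (ιN x) ρN →
    ∀ ρO : ℕ → So, IsRun stepO (ιO x) ρO →
      ((RunCost TermN cN ρN : ℝ) - (RunCost TermO cO ρO : ℝ)) ≤ t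

theorem IsRun.reachable {S : Type*} {step : S → S → Prop} {Init : Set S} {s : S} {ρ : ℕ → S}
    (hρ : IsRun step s ρ) (hs : s ∈ Init) (n : ℕ) : Reachable step Init (ρ n) :=
  ⟨s, hs, ρ, n, hρ, rfl⟩

theorem IsPF.add_cost_le {S : Type*} {step : S → S → Prop} {Term Init : Set S} {c : S → ℤ}
    {φ : S → ℝ} (hφ : IsPF step Term Init c φ) {s : S} (hs : s ∈ Init) {ρ : ℕ → S}
    (hρ : IsRun step s ρ) (n : ℕ) : φ (ρ n) + ((c (ρ n) : ℝ) - c (ρ 0)) ≤ φ (ρ 0) := by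
  induction n with
  | zero => simp
  | succ n ih =>
    have h := hφ.1 _ _ (hρ.reachable hs n) (hρ.2 n)
    linarith

theorem IsPF.runCost_le {S : Type*} {step : S → S → Prop} {Term Init : Set S} {c : S → ℤ}
    {φ : S → ℝ} (hφ : IsPF step Term Init c φ) (hterm : Terminating step Term Init)
    {s : S} (hs : s ∈ Init) {ρ : ℕ → S} (hρ : IsRun step s ρ) :
    (RunCost Term c ρ : ℝ) ≤ φ s := by
  have hreach : Reachable step Init s := hρ.1 ▸ hρ.reachable hs 0
  have hmem : ρ (sInf {n | ρ n ∈ Term}) ∈ Term := Nat.sInf_mem (hterm s hreach ρ hρ)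
  have hnonneg := hφ.2 _ (hρ.reachable hs _) hmem
  have hle := hφ.add_cost_le hs hρ (sInf {n | ρ n ∈ Term})
  rw [← hρ.1, RunCost]
  push_cast
  linarith

/-- Negating both the valuation and the function turns an anti-PF into a PF. -/
theorem IsAntiPF.neg {S : Type*} {step : S → S → Prop} {Term Init : Set S} {c : S → ℤ}
    {χ : S → ℝ} (hχ : IsAntiPF step Term Init c χ) : IsPF step Term Init (-c) (-χ) := by
  refine ⟨fun s s' hs hstep => ?_, fun s hs hsT => ?_⟩
  · have h := hχ.1 s s' hs hstep
    simp only [Pi.neg_apply, Int.cast_neg]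
    linarith
  · simpa using hχ.2 s hs hsT

theorem runCost_neg {S : Type*} (Term : Set S) (c : S → ℤ) (ρ : ℕ → S) :
    RunCost Term (-c) ρ = -RunCost Term c ρ := by
  simp only [RunCost, Pi.neg_apply]
  ring

theorem IsAntiPF.le_runCost {S : Type*} {step : S → S → Prop} {Term Init : Set S} {c : S → ℤ}
    {χ : S → ℝ} (hχ : IsAntiPF step Term Init c χ) (hterm : Terminating step Term Init)
    {s : S} (hs : s ∈ Init) {ρ : ℕ → S} (hρ : IsRun step s ρ) :
    χ s ≤ (RunCost Term c ρ : ℝ) := by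
  have h := hχ.neg.runCost_le hterm hs hρ
  rw [runCost_neg, Int.cast_neg, Pi.neg_apply] at h
  exact neg_le_neg_iff.mp h

/-- a PF for the new system and an anti-PF for the old system bound the
difference in cost between the two systems on any shared input. -/
theorem pf_antipf_bound_diffcost {Sn So X : Type*}
    (stepN : Sn → Sn → Prop) (TermN : Set Sn) (cN : Sn → ℤ)
    (stepO : So → So → Prop) (TermO : Set So) (cO : So → ℤ)
    (Θ₀ : Set X) (ιN : X → Sn) (ιO : X → So)
    (htotalN : ∀ s : Sn, ∃ s', stepN s s')
    (htotalO : ∀ s : So, ∃ s', stepO s s')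
    (hTermN : ∀ s ∈ TermN, ∀ s', stepN s s' → s' = s)
    (hTermO : ∀ s ∈ TermO, ∀ s', stepO s s' → s' = s)
    (hterminatingN : Terminating stepN TermN (ιN '' Θ₀))
    (hterminatingO : Terminating stepO TermO (ιO '' Θ₀))
    (φN : Sn → ℝ) (hφN : IsPF stepN TermN (ιN '' Θ₀) cN φN)
    (χO : So → ℝ) (hχO : IsAntiPF stepO TermO (ιO '' Θ₀) cO χO)
    (x : X) (hx : x ∈ Θ₀)
    (ρN : ℕ → Sn) (hρN : IsRun stepN (ιN x) ρN)
    (ρO : ℕ → So) (hρO : IsRun stepO (ιO x) ρO) :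
    ((RunCost TermN cN ρN : ℝ) - (RunCost TermO cO ρO : ℝ)) ≤ φN (ιN x) - χO (ιO x) := by
  exact sub_le_sub (hφN.runCost_le hterminatingN (Set.mem_image_of_mem ιN hx) hρN)
    (hχO.le_runCost hterminatingO (Set.mem_image_of_mem ιO hx) hρO)
end
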